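/- Let I and P be positive integers, and let η, L > 0 satisfy η ≤ 1/(60·L·I·P); set q₁ = 18·η²·L²·I and q₂ = 15·η²·L²·I·P. Let a₀,…,a_{P−1} and b₀,…,b_{P−1} be nonnegative reals (with the convention a_s = b_s = 0 for s ≥ P). Suppose d, m : {0,…,I·P} → [0,∞) satisfy d₀ = m₀ = 0, d_t = 0 whenever k_t = 0, and for every 1 ≤ t ≤ I·P: m_t ≤ (1 + 1/(I·P))·m_{t−1} + q₂·d_{t−1} + b_{r_{t−1}}, and if k_t ≠ 0 then d_t ≤ (1 + 1/I)·d_{t−1} + q₁·m_{t−1} + a_{r_{t−1}}. Then for every 0 ≤ t ≤ I·P: m_t ≤ 7·I·Σ_{s=0}^{r_t} b_s + 12·q₂·I²·Σ_{s=0}^{r_t} a_s. -/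

import Mathlib

open Finset

lemma aux_pow_le (n k : ℕ) (hn : 0 < n) (hk : k ≤ n) : (1 + 1 / (n : ℝ)) ^ k ≤ 3 := by
  have hn' : (0 : ℝ) < n := by exact_mod_cast hn
  have h1 : (1 + 1 / (n : ℝ)) ^ k ≤ (1 + 1 / (n : ℝ)) ^ n :=
    pow_le_pow_right₀ (by have : 0 < 1 / (n : ℝ) := by positivity
                          linarith) hk
  have h2 : (1 + 1 / (n : ℝ)) ^ n ≤ (Real.exp (1 / (n : ℝ))) ^ n := by
    apply pow_le_pow_left₀ (by positivity)
    have := Real.add_one_le_exp (1 / (n : ℝ))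
    linarith
  have h3 : (Real.exp (1 / (n : ℝ))) ^ n = Real.exp 1 := by
    rw [← Real.exp_nat_mul]
    congr 1
    field_simp
  have := Real.exp_one_lt_d9
  rw [h3] at h2
  linarith

lemma aux_step (I T : ℕ) (hI : 0 < I) :
    ((T + 1) % I = 0 ∧ (T + 1) / I = T / I + 1 ∧ T % I + 1 = I) ∨
    ((T + 1) % I ≠ 0 ∧ (T + 1) / I = T / I ∧ (T + 1) % I = T % I + 1) := by
  have h1 := Nat.div_add_mod T I
  have h2 := Nat.mod_lt T hI
  by_cases h : T % I + 1 = I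
  · left
    have e : T + 1 = I * (T / I + 1) := by rw [mul_add]; omega
    refine ⟨?_, ?_, h⟩
    · rw [e]; exact Nat.mul_mod_right _ _
    · conv_lhs => rw [e]
      exact Nat.mul_div_cancel_left _ hI
  · right
    have e : T + 1 = (T % I + 1) + I * (T / I) := by omega
    have hm : (T + 1) % I = T % I + 1 := by
      conv_lhs => rw [e]
      rw [Nat.add_mul_mod_self_left]
      exact Nat.mod_eq_of_lt (by omega)
    refine ⟨by omega, ?_, hm⟩
    conv_lhs => rw [e]
    rw [Nat.add_mul_div_left _ _ hI, Nat.div_eq_of_lt (by omega)]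
    omega

lemma aux_sum (I : ℕ) (hI : 0 < I) (b : ℕ → ℝ) (T : ℕ) :
    ∑ j ∈ Finset.range T, b (j / I)
      = I * ∑ s ∈ Finset.range (T / I), b s + (T % I : ℕ) * b (T / I) := by
  induction T with
  | zero => simp
  | succ T ih =>
    rw [Finset.sum_range_succ, ih]
    rcases aux_step I T hI with ⟨h1, h2, h3⟩ | ⟨h1, h2, h3⟩
    · rw [h1, h2, Finset.sum_range_succ]
      have : (I : ℝ) = (T % I : ℕ) + 1 := by exact_mod_cast h3.symm
      push_cast
      linear_combination (-b (T / I)) * this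
    · rw [h2, h3]
      push_cast
      ring

lemma aux_sum_le (I : ℕ) (hI : 0 < I) (b : ℕ → ℝ) (hb : ∀ s, 0 ≤ b s) (T : ℕ) :
    ∑ j ∈ Finset.range T, b (j / I) ≤ I * ∑ s ∈ Finset.range (T / I + 1), b s := by
  rw [aux_sum I hI, Finset.sum_range_succ, mul_add]
  have : ((T % I : ℕ) : ℝ) ≤ I := by exact_mod_cast (Nat.mod_lt T hI).le
  have := mul_le_mul_of_nonneg_right this (hb (T / I))
  linarith

/-- Unrolled recursion bound on the client-drift quantity `d` from the proof of
Lemma 1 (Amplified SCAFFOLD).  Here `r_t = t / I` and `k_t = t % I`. -/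
theorem drift_recursion_bound_m
    (I P : ℕ) (hI : 0 < I) (hP : 0 < P)
    (η L : ℝ) (hη : 0 < η) (hL : 0 < L)
    (hηle : η ≤ 1 / (60 * L * I * P))
    (q₁ q₂ : ℝ)
    (hq₁ : q₁ = 18 * η ^ 2 * L ^ 2 * I)
    (hq₂ : q₂ = 15 * η ^ 2 * L ^ 2 * I * P)
    (a b : ℕ → ℝ)
    (ha0 : ∀ s, 0 ≤ a s) (hb0 : ∀ s, 0 ≤ b s)
    (haP : ∀ s, P ≤ s → a s = 0) (hbP : ∀ s, P ≤ s → b s = 0)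
    (d m : ℕ → ℝ)
    (hd0 : ∀ t, t ≤ I * P → 0 ≤ d t) (hm0 : ∀ t, t ≤ I * P → 0 ≤ m t)
    (hdinit : d 0 = 0) (hminit : m 0 = 0)
    (hdk : ∀ t, t ≤ I * P → t % I = 0 → d t = 0)
    (hmrec : ∀ t, 1 ≤ t → t ≤ I * P →
      m t ≤ (1 + 1 / ((I : ℝ) * P)) * m (t - 1) + q₂ * d (t - 1) + b ((t - 1) / I))
    (hdrec : ∀ t, 1 ≤ t → t ≤ I * P → t % I ≠ 0 →
      d t ≤ (1 + 1 / (I : ℝ)) * d (t - 1) + q₁ * m (t - 1) + a ((t - 1) / I)) :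
    ∀ t, t ≤ I * P →
      m t ≤ 7 * I * ∑ s ∈ Finset.range (t / I + 1), b s
        + 12 * q₂ * I ^ 2 * ∑ s ∈ Finset.range (t / I + 1), a s := by
  have hI' : (0 : ℝ) < I := by exact_mod_cast hI
  have hP' : (0 : ℝ) < P := by exact_mod_cast hP
  have hP1 : (1 : ℝ) ≤ P := by exact_mod_cast hP
  have hq1n : 0 ≤ q₁ := by rw [hq₁]; positivity
  have hq2n : 0 ≤ q₂ := by rw [hq₂]; positivity
  set y : ℝ := η * L * I * P with hy
  have hy0 : 0 < y := by positivity
  have hy1 : y ≤ 1 / 60 := by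
    rw [le_div_iff₀ (by positivity)] at hηle
    rw [hy]
    linarith
  have hy2 : y ^ 2 ≤ 1 / 3600 := by nlinarith
  have hIPq2 : (I * P : ℝ) * q₂ ≤ 1 / 240 := by
    have : (I * P : ℝ) * q₂ = 15 * y ^ 2 := by rw [hq₂, hy]; ring
    linarith
  have hIq1 : (I : ℝ) * q₁ ≤ 1 / 200 := by
    have h : (I : ℝ) * q₁ * P ^ 2 = 18 * y ^ 2 := by rw [hq₁, hy]; ring
    have h0 : 0 ≤ (I : ℝ) * q₁ := by positivity
    have h2 : (1 : ℝ) ≤ P ^ 2 := by nlinarith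
    nlinarith
  have hε : (I * P : ℝ) * q₂ * (I * q₁) ≤ 1 / 48000 := by
    calc (I * P : ℝ) * q₂ * (I * q₁) ≤ 1 / 240 * (1 / 200) :=
          mul_le_mul hIPq2 hIq1 (by positivity) (by norm_num)
      _ = 1 / 48000 := by norm_num
  set A : ℕ → ℝ := fun t => ∑ s ∈ Finset.range (t / I + 1), a s with hA
  set B : ℕ → ℝ := fun t => ∑ s ∈ Finset.range (t / I + 1), b s with hB
  have hA0 : ∀ t, 0 ≤ A t := fun t => Finset.sum_nonneg (fun s _ => ha0 s)
  have hB0 : ∀ t, 0 ≤ B t := fun t => Finset.sum_nonneg (fun s _ => hb0 s)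
  have hAm : ∀ t, A t ≤ A (t + 1) := fun t =>
    Finset.sum_le_sum_of_subset_of_nonneg
      (Finset.range_subset_range.2 (Nat.succ_le_succ (Nat.div_le_div_right (Nat.le_succ t))))
      (fun s _ _ => ha0 s)
  have hBm : ∀ t, B t ≤ B (t + 1) := fun t =>
    Finset.sum_le_sum_of_subset_of_nonneg
      (Finset.range_subset_range.2 (Nat.succ_le_succ (Nat.div_le_div_right (Nat.le_succ t))))
      (fun s _ _ => hb0 s)
  set S : ℕ → ℝ := fun t => 7 * I * B t + 12 * q₂ * I ^ 2 * A t with hS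
  have hS0 : ∀ t, 0 ≤ S t := fun t => by
    have := hA0 t
    have := hB0 t
    simp only [hS]
    positivity
  have hSm : ∀ t, S t ≤ S (t + 1) := fun t => by
    have h1 := hAm t
    have h2 := hBm t
    simp only [hS]
    gcongr
  set W : ℕ → ℝ := fun t => ∑ j ∈ Finset.range t, b (j / I)
    + 3 * I * q₂ * ∑ j ∈ Finset.range t, a (j / I) + t * (3 * I * q₁ * q₂) * S t with hW
  have hW0 : ∀ t, 0 ≤ W t := fun t => by
    have h1 : 0 ≤ ∑ j ∈ Finset.range t, b (j / I) := Finset.sum_nonneg (fun s _ => hb0 _)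
    have h2 : 0 ≤ ∑ j ∈ Finset.range t, a (j / I) := Finset.sum_nonneg (fun s _ => ha0 _)
    have := hS0 t
    simp only [hW]
    positivity
  set g : ℝ := 1 + 1 / ((I : ℝ) * P) with hg
  set c : ℝ := 1 + 1 / (I : ℝ) with hc
  have hg1 : 1 ≤ g := by
    have : 0 < 1 / ((I : ℝ) * P) := by positivity
    linarith
  have hc1 : 1 ≤ c := by
    have : 0 < 1 / (I : ℝ) := by positivity
    linarith
  have hWS : ∀ t, t ≤ I * P → m t ≤ g ^ t * W t → m t ≤ S t := by
    intro t ht hm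
    have hg3 : g ^ t ≤ 3 := by
      have := aux_pow_le (I * P) t (Nat.mul_pos hI hP) ht
      push_cast at this
      exact this
    have h1 := aux_sum_le I hI b hb0 t
    have h2 := aux_sum_le I hI a ha0 t
    have h3 : g ^ t * W t ≤ 3 * W t := mul_le_mul_of_nonneg_right hg3 (hW0 t)
    have ht' : (t : ℝ) ≤ I * P := by exact_mod_cast ht
    have h4 : (t : ℝ) * (3 * I * q₁ * q₂) * S t ≤ 3 / 48000 * S t := by
      apply mul_le_mul_of_nonneg_right _ (hS0 t)
      have : (t : ℝ) * (3 * I * q₁ * q₂) ≤ I * P * (3 * I * q₁ * q₂) := by gcongr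
      linarith
    have h5 : 3 * I * q₂ * ∑ j ∈ Finset.range t, a (j / I) ≤ 3 * I * q₂ * (I * A t) := by
      gcongr
    have h6 : W t ≤ I * B t + 3 * I * q₂ * (I * A t) + 3 / 48000 * S t := by
      simp only [hW]
      linarith
    have h7 : 0 ≤ I * B t := mul_nonneg hI'.le (hB0 t)
    have h8 : 0 ≤ q₂ * I ^ 2 * A t := mul_nonneg (by positivity) (hA0 t)
    have h9 : S t = 7 * (I * B t) + 12 * (q₂ * I ^ 2 * A t) := by simp only [hS]; ring
    have h10 : 3 * I * q₂ * (I * A t) = 3 * (q₂ * I ^ 2 * A t) := by ring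
    linarith
  have key : ∀ t, t ≤ I * P → m t ≤ g ^ t * W t ∧
      d t ≤ c ^ (t % I) * (t % I : ℕ) * (a (t / I) + q₁ * S t) := by
    intro t
    induction t with
    | zero =>
      intro _
      simp [hminit, hdinit, hW]
    | succ T ih =>
      intro hT
      have hT' : T ≤ I * P := by omega
      obtain ⟨im, id'⟩ := ih hT'
      have hmS := hWS T hT' im
      have hX0 : 0 ≤ a (T / I) + q₁ * S T :=
        add_nonneg (ha0 _) (mul_nonneg hq1n (hS0 T))
      have hmr := hmrec (T + 1) (by omega) hT
      simp only [Nat.add_sub_cancel] at hmr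
      constructor
      · have hd3 : d T ≤ 3 * I * (a (T / I) + q₁ * S T) := by
          refine id'.trans (mul_le_mul_of_nonneg_right ?_ hX0)
          have hk := (Nat.mod_lt T hI).le
          exact mul_le_mul (aux_pow_le I _ hI hk) (by exact_mod_cast hk) (by positivity)
            (by norm_num)
        have hqd : q₂ * d T ≤ q₂ * (3 * I * (a (T / I) + q₁ * S T)) := by gcongr
        have hgT : 1 ≤ g ^ (T + 1) := one_le_pow₀ hg1
        have hY0 : 0 ≤ q₂ * (3 * I * (a (T / I) + q₁ * S T)) + b (T / I) :=
          add_nonneg (mul_nonneg hq2n (mul_nonneg (by positivity) hX0)) (hb0 _)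
        have hgm : g * m T ≤ g * (g ^ T * W T) := by gcongr
        have hY1 : q₂ * (3 * I * (a (T / I) + q₁ * S T)) + b (T / I) ≤
            g ^ (T + 1) * (q₂ * (3 * I * (a (T / I) + q₁ * S T)) + b (T / I)) :=
          le_mul_of_one_le_left hY0 hgT
        have hWstep : W T + (q₂ * (3 * I * (a (T / I) + q₁ * S T)) + b (T / I)) ≤ W (T + 1) := by
          have : ((T : ℝ) + 1) * (3 * I * q₁ * q₂) * S T
              ≤ ((T : ℝ) + 1) * (3 * I * q₁ * q₂) * S (T + 1) :=
            mul_le_mul_of_nonneg_left (hSm T) (by positivity)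
          simp only [hW, Finset.sum_range_succ]
          push_cast
          linarith
        calc m (T + 1) ≤ g * (g ^ T * W T) +
              g ^ (T + 1) * (q₂ * (3 * I * (a (T / I) + q₁ * S T)) + b (T / I)) := by linarith
          _ = g ^ (T + 1) * (W T + (q₂ * (3 * I * (a (T / I) + q₁ * S T)) + b (T / I))) := by
            ring
          _ ≤ g ^ (T + 1) * W (T + 1) := by gcongr
      · rcases aux_step I T hI with ⟨h1, h2, h3⟩ | ⟨h1, h2, h3⟩
        · rw [hdk _ hT h1, h1]
          simp
        · have hdr := hdrec (T + 1) (by omega) hT h1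
          simp only [Nat.add_sub_cancel] at hdr
          have hSe : S (T + 1) = S T := by simp only [hS, hA, hB, h2]
          rw [h3, h2, hSe]
          have hqm : q₁ * m T ≤ q₁ * S T := by gcongr
          have hcd : c * d T ≤ c * (c ^ (T % I) * (T % I : ℕ) * (a (T / I) + q₁ * S T)) := by
            gcongr
          have hX1 : a (T / I) + q₁ * S T ≤ c ^ (T % I + 1) * (a (T / I) + q₁ * S T) :=
            le_mul_of_one_le_left hX0 (one_le_pow₀ hc1)
          calc d (T + 1) ≤ c * (c ^ (T % I) * (T % I : ℕ) * (a (T / I) + q₁ * S T))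
                + c ^ (T % I + 1) * (a (T / I) + q₁ * S T) := by linarith
            _ = _ := by push_cast; ring
  intro t ht
  exact hWS t ht (key t ht).1
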